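/- Let K(a,b) = (ab)^{-β}(1+|a-b|)^{-1} for positive integers a, b and 0 < β ≤ 1. Then the operator (Tξ)_a = Σ_b K(a,b) ξ_b is bounded on ℓ²_1, i.e. there exists C(β) with Σ_a a (Σ_b K(a,b)|ξ_b|)² ≤ C Σ_b b |ξ_b|². -/

import Mathlib

/-!
The proof is Schur's test with the asymmetric weight `b`. Writing `K` for the kernel,
Cauchy–Schwarz gives `(∑_b K(a,b) |ξ_b|)² ≤ (∑_b K(a,b) / b) (∑_b K(a,b) b |ξ_b|²)`, so it
suffices that `a ∑_b K(a,b) / b ≤ C` and `∑_a K(a,b) ≤ C` uniformly.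

Both follow from the pointwise bound `K(a,b) ≤ b^{-1-β} + (1+|a-b|)^{-1-β}`
(`schurKernel_le`), whose right-hand side has uniformly bounded sum over `b`; this also
bounds `∑_a K(a,b)` because `K` is symmetric. The weighted sum needs in addition
`a / b ≤ 1 + |a-b| / b`, which gives `a K(a,b) / b ≤ K(a,b) + b^{-1-β}`
(`schurKernel_weighted_le`).
-/

/-- The kernel `(ab)^{-β}(1+|a-b|)^{-1}` on the positive integers. -/
noncomputable def schurKernel (β : ℝ) (a b : ℕ+) : ℝ :=
  ((a : ℝ) * (b : ℝ)) ^ (-β) * (1 + |(a : ℝ) - (b : ℝ)|)⁻¹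

theorem one_le_pnat_cast (a : ℕ+) : (1 : ℝ) ≤ a := by
  exact_mod_cast (one_le : 1 ≤ a)

theorem schurKernel_nonneg (β : ℝ) (a b : ℕ+) : 0 ≤ schurKernel β a b := by
  unfold schurKernel; positivity

theorem schurKernel_comm (β : ℝ) (a b : ℕ+) : schurKernel β a b = schurKernel β b a := by
  unfold schurKernel
  rw [mul_comm (a : ℝ), abs_sub_comm]

theorem mul_rpow_neg_le {β : ℝ} (hβ : 0 < β) (a b : ℕ+) :
    ((a : ℝ) * (b : ℝ)) ^ (-β) ≤ (b : ℝ) ^ (-β) := by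
  have ha := one_le_pnat_cast a
  have hb := one_le_pnat_cast b
  exact Real.rpow_le_rpow_of_nonpos (by linarith) (by nlinarith) (by linarith)

/-- A form of Young's inequality: the left side is at most `(min x y)^{-1-β}`. -/
theorem rpow_neg_mul_inv_le {β x y : ℝ} (hβ : 0 < β) (hx : 0 < x) (hy : 0 < y) :
    x ^ (-β) * y⁻¹ ≤ x ^ (-1 - β) + y ^ (-1 - β) := by
  have split (z : ℝ) (hz : 0 < z) : z ^ (-1 - β) = z ^ (-β) * z⁻¹ := by
    rw [← Real.rpow_neg_one z, ← Real.rpow_add hz]; ring_nf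
  rcases le_total x y with h | h
  · have h1 : y⁻¹ ≤ x⁻¹ := inv_anti₀ hx h
    have h2 : 0 ≤ y ^ (-1 - β) := by positivity
    have h3 : x ^ (-β) * y⁻¹ ≤ x ^ (-β) * x⁻¹ := by gcongr
    rw [split x hx]; linarith
  · have h1 : x ^ (-β) ≤ y ^ (-β) := Real.rpow_le_rpow_of_nonpos hy h (by linarith)
    have h2 : 0 ≤ x ^ (-1 - β) := by positivity
    have h3 : x ^ (-β) * y⁻¹ ≤ y ^ (-β) * y⁻¹ := by gcongr
    rw [split y hy]; linarith

theorem schurKernel_le {β : ℝ} (hβ : 0 < β) (a b : ℕ+) :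
    schurKernel β a b ≤ (b : ℝ) ^ (-1 - β) + (1 + |(a : ℝ) - (b : ℝ)|) ^ (-1 - β) := by
  have hb := one_le_pnat_cast b
  have hy : 0 < 1 + |(a : ℝ) - (b : ℝ)| := by positivity
  refine le_trans ?_ (rpow_neg_mul_inv_le hβ (by linarith) hy)
  unfold schurKernel
  exact mul_le_mul_of_nonneg_right (mul_rpow_neg_le hβ a b) (by positivity)

theorem schurKernel_le_one {β : ℝ} (hβ : 0 < β) (a b : ℕ+) : schurKernel β a b ≤ 1 := by
  have ha := one_le_pnat_cast a
  have hb := one_le_pnat_cast b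
  unfold schurKernel
  refine mul_le_one₀ (Real.rpow_le_one_of_one_le_of_nonpos (by nlinarith) (by linarith))
    (by positivity) (inv_le_one_of_one_le₀ ?_)
  linarith [abs_nonneg ((a : ℝ) - b)]

theorem schurKernel_weighted_le {β : ℝ} (hβ : 0 < β) (a b : ℕ+) :
    (a : ℝ) * (schurKernel β a b / b) ≤ schurKernel β a b + (b : ℝ) ^ (-1 - β) := by
  have hb : (0 : ℝ) < b := by linarith [one_le_pnat_cast b]
  set d := |(a : ℝ) - (b : ℝ)| with hd
  have hd0 : 0 ≤ d := abs_nonneg _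
  have hab : (a : ℝ) ≤ b + (1 + d) := by linarith [le_abs_self ((a : ℝ) - b)]
  have hsplit : (b : ℝ) ^ (-1 - β) = (b : ℝ) ^ (-β) * (b : ℝ)⁻¹ := by
    rw [← Real.rpow_neg_one (b : ℝ), ← Real.rpow_add hb]; ring_nf
  calc (a : ℝ) * (schurKernel β a b / b)
      ≤ (b + (1 + d)) * (schurKernel β a b / b) :=
        mul_le_mul_of_nonneg_right hab (div_nonneg (schurKernel_nonneg β a b) hb.le)
    _ = schurKernel β a b + ((a : ℝ) * b) ^ (-β) * (b : ℝ)⁻¹ := by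
        unfold schurKernel
        rw [← hd]
        have : 1 + d ≠ 0 := by positivity
        field_simp
    _ ≤ _ := by
        rw [hsplit]
        have := mul_le_mul_of_nonneg_right (mul_rpow_neg_le hβ a b) (inv_nonneg.2 hb.le)
        linarith

theorem summable_pnat_rpow {β : ℝ} (hβ : 0 < β) :
    Summable fun b : ℕ+ => (b : ℝ) ^ (-1 - β) :=
  (Real.summable_nat_rpow.2 (by linarith : -1 - β < -1)).comp_injective PNat.coe_injective

theorem summable_int_rpow {β : ℝ} (hβ : 0 < β) :
    Summable fun n : ℤ => (1 + |(n : ℝ)|) ^ (-1 - β) := by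
  have h : Summable fun n : ℕ => (1 + (n : ℝ)) ^ (-1 - β) := by
    have := (summable_nat_add_iff 1).2 (Real.summable_nat_rpow.2 (by linarith : -1 - β < -1))
    simpa [add_comm] using this
  refine Summable.of_nat_of_neg ?_ ?_ <;> simpa using h

/-- Finite partial sums of each row of the kernel are bounded uniformly in the row. -/
theorem exists_sum_schurKernel_le {β : ℝ} (hβ : 0 < β) :
    ∃ C > 0, ∀ (a : ℕ+) (s : Finset ℕ+), ∑ b ∈ s, schurKernel β a b ≤ C := by
  have h1 := summable_pnat_rpow hβ
  have h2 := summable_int_rpow hβ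
  refine ⟨(∑' b : ℕ+, (b : ℝ) ^ (-1 - β)) + (∑' n : ℤ, (1 + |(n : ℝ)|) ^ (-1 - β)) + 1,
    by positivity, fun a s => ?_⟩
  have e1 : ∑ b ∈ s, (b : ℝ) ^ (-1 - β) ≤ ∑' b : ℕ+, (b : ℝ) ^ (-1 - β) :=
    h1.sum_le_tsum s fun _ _ => by positivity
  have hinj : Function.Injective fun b : ℕ+ => (a : ℤ) - (b : ℤ) := fun x y hxy => by
    have : (x : ℤ) = y := by simpa using hxy
    exact_mod_cast this
  have e2 : ∑ b ∈ s, (1 + |(a : ℝ) - (b : ℝ)|) ^ (-1 - β) ≤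
      ∑' n : ℤ, (1 + |(n : ℝ)|) ^ (-1 - β) := by
    have := h2.sum_le_tsum (s.map ⟨_, hinj⟩) fun _ _ => by positivity
    simpa using this
  have e3 := Finset.sum_le_sum fun b (_ : b ∈ s) => schurKernel_le hβ a b
  rw [Finset.sum_add_distrib] at e3
  linarith


/-- Second part of Lemma 2.3 (iv), scalar-kernel form: the kernel
`K(a,b) = (ab)^{-β}(1+|a-b|)^{-1}` defines a bounded operator on `ℓ²_1`. -/
theorem stmt_8 (β : ℝ) (hβ0 : 0 < β) (hβ1 : β ≤ 1) :
    ∃ C > 0, ∀ ξ : ℕ+ → ℝ, Summable (fun b : ℕ+ => (b : ℝ) * |ξ b| ^ 2) →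
      ∑' a : ℕ+, (a : ℝ) *
        (∑' b : ℕ+, ((a : ℝ) * (b : ℝ)) ^ (-β) * (1 + |(a : ℝ) - (b : ℝ)|)⁻¹ * |ξ b|) ^ 2 ≤
      C * ∑' b : ℕ+, (b : ℝ) * |ξ b| ^ 2 := by
  obtain ⟨C₁, hC₁, hrow⟩ := exists_sum_schurKernel_le hβ0
  have hZ := summable_pnat_rpow hβ0
  set Z := ∑' b : ℕ+, (b : ℝ) ^ (-1 - β) with hZdef
  have hZ0 : 0 ≤ Z := tsum_nonneg fun _ => by positivity
  refine ⟨(C₁ + Z) * C₁, by positivity, fun ξ hξ => ?_⟩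
  have hK := schurKernel_nonneg β
  -- `B a` is the second Cauchy–Schwarz factor.
  set B : ℕ+ → ℝ := fun a => ∑' b : ℕ+, schurKernel β a b * ((b : ℝ) * |ξ b| ^ 2) with hB
  have hnn (a b : ℕ+) : 0 ≤ schurKernel β a b * ((b : ℝ) * |ξ b| ^ 2) :=
    mul_nonneg (hK a b) (by positivity)
  have hBs (a : ℕ+) : Summable fun b : ℕ+ => schurKernel β a b * ((b : ℝ) * |ξ b| ^ 2) :=
    hξ.of_nonneg_of_le (hnn a) fun b =>
      mul_le_of_le_one_left (by positivity) (schurKernel_le_one hβ0 a b)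
  have hB0 (a : ℕ+) : 0 ≤ B a := tsum_nonneg (hnn a)
  have hweighted (a : ℕ+) (s : Finset ℕ+) :
      (a : ℝ) * ∑ b ∈ s, schurKernel β a b / b ≤ C₁ + Z := by
    rw [Finset.mul_sum]
    refine (Finset.sum_le_sum fun b _ => schurKernel_weighted_le hβ0 a b).trans ?_
    rw [Finset.sum_add_distrib]
    exact add_le_add (hrow a s) (hZ.sum_le_tsum s fun _ _ => by positivity)
  have hpoint (a : ℕ+) :
      (a : ℝ) * (∑' b : ℕ+, schurKernel β a b * |ξ b|) ^ 2 ≤ (C₁ + Z) * B a := by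
    have ha : (0 : ℝ) < a := by linarith [one_le_pnat_cast a]
    have hfin (s : Finset ℕ+) :
        ∑ b ∈ s, schurKernel β a b * |ξ b| ≤ √((C₁ + Z) * B a / a) := by
      apply Real.le_sqrt_of_sq_le
      have hcs := Finset.sum_sq_le_sum_mul_sum_of_sq_le_mul s
        (r := fun b => schurKernel β a b * |ξ b|) (f := fun b => schurKernel β a b / b)
        (g := fun b => schurKernel β a b * ((b : ℝ) * |ξ b| ^ 2))
        (fun b _ => div_nonneg (hK a b) (by positivity)) (fun b _ => hnn a b)
        (fun b _ => by
          have : (b : ℝ) ≠ 0 := (zero_lt_one.trans_le (one_le_pnat_cast b)).ne'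
          refine le_of_eq ?_
          field_simp)
      rw [le_div_iff₀ ha]
      have hle : ∑ b ∈ s, schurKernel β a b * ((b : ℝ) * |ξ b| ^ 2) ≤ B a :=
        (hBs a).sum_le_tsum s fun b _ => hnn a b
      calc (∑ b ∈ s, schurKernel β a b * |ξ b|) ^ 2 * a
          ≤ ((∑ b ∈ s, schurKernel β a b / b) *
              ∑ b ∈ s, schurKernel β a b * ((b : ℝ) * |ξ b| ^ 2)) * a := by gcongr
        _ = ((a : ℝ) * ∑ b ∈ s, schurKernel β a b / b) *
              ∑ b ∈ s, schurKernel β a b * ((b : ℝ) * |ξ b| ^ 2) := by ring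
        _ ≤ (C₁ + Z) * B a :=
            mul_le_mul (hweighted a s) hle (Finset.sum_nonneg fun b _ => hnn a b) (by positivity)
    have h0 (b : ℕ+) : 0 ≤ schurKernel β a b * |ξ b| := mul_nonneg (hK a b) (abs_nonneg _)
    have htsum := Real.tsum_le_of_sum_le h0 hfin
    have hsq := pow_le_pow_left₀ (tsum_nonneg h0) htsum 2
    rw [Real.sq_sqrt (div_nonneg (mul_nonneg (by positivity) (hB0 a)) ha.le),
      le_div_iff₀ ha] at hsq
    linarith
  refine Real.tsum_le_of_sum_le (fun a => by positivity) fun s => ?_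
  -- Column sums of the kernel are row sums by symmetry.
  have hcol : ∑ a ∈ s, B a ≤ C₁ * ∑' b : ℕ+, (b : ℝ) * |ξ b| ^ 2 := by
    rw [hB, ← Summable.tsum_finsetSum fun a _ => hBs a, ← tsum_mul_left]
    refine Summable.tsum_le_tsum (fun b => ?_) (summable_sum fun a _ => hBs a) (hξ.mul_left _)
    rw [← Finset.sum_mul]
    refine mul_le_mul_of_nonneg_right ?_ (by positivity)
    simpa only [schurKernel_comm β b] using hrow b s
  calc _ ≤ ∑ a ∈ s, (C₁ + Z) * B a := Finset.sum_le_sum fun a _ => hpoint a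
    _ = (C₁ + Z) * ∑ a ∈ s, B a := by rw [Finset.mul_sum]
    _ ≤ (C₁ + Z) * (C₁ * ∑' b : ℕ+, (b : ℝ) * |ξ b| ^ 2) := by gcongr
    _ = _ := by ring
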